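/- arXiv:0912.3856 — 2 statements merged into one kernel-verified Lean document; each statement's English description precedes it below -/
import Mathlib

section
/- Let X : [0, T) → Ω be a differentiable trajectory such that for all t, X(t) lies in the feasible domain Ω, every row sum x_j(t) = Σ_{i=1}^Q x_j^i(t) is strictly positive, and X satisfies the replicator dynamics d/dt x_j^i(t) = x_j^i(t) (F̄_j(X(t)) − F_j^i(X(t))) for all i, j. Then the total system cost t ↦ 𝒞(X(t)) is nonincreasing on [0, T). -/
open Finset Set

/-- The feasible domain Ω: all entries nonnegative and each column sum below capacity. -/
def feasible {Q : ℕ} (C : Fin Q → ℝ) : Set (Fin Q → Fin Q → ℝ) :=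
  {X | (∀ j i, 0 ≤ X j i) ∧ ∀ i, (∑ l, X l i) < C i}

/-- The total system cost 𝒞(X). -/
noncomputable def cost {Q : ℕ} (C : Fin Q → ℝ) (p : Fin Q → Fin Q → ℝ)
    (X : Fin Q → Fin Q → ℝ) : ℝ :=
  ∑ i, ((∑ r, X r i) / (C i - ∑ l, X l i) + ∑ r, p r i * X r i)

/-- The payoff F_j^i(X) of option i to mTracker j. -/
noncomputable def payoff {Q : ℕ} (C : Fin Q → ℝ) (p : Fin Q → Fin Q → ℝ)
    (X : Fin Q → Fin Q → ℝ) (j i : Fin Q) : ℝ :=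
  1 / (C i - ∑ l, X l i) + p j i + (∑ l, X l i) / (C i - ∑ l, X l i) ^ 2

/-!
The payoff `F_j^i` is the partial derivative of the cost with respect to `x_j^i`, so the cost
changes along a trajectory at the rate `∑ j, ∑ i, F_j^i * (d/dt x_j^i)`. Since the replicator
dynamics conserve the total mass of each row, `F_j^i` may be replaced by its deviation from the
average payoff of row `j`, and the inner sum becomes minus a weighted sum of squared deviations.
-/

section Replicator

variable {ι 𝕜 : Type*} [Fintype ι] [Field 𝕜]

/-- The average `F̄` of the payoffs `f` when option `i` is used at rate `x i`. The weights `x` need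
not sum to one; if they sum to zero the value is zero. -/
def averagePayoff (x f : ι → 𝕜) : 𝕜 :=
  (1 / ∑ r, x r) * ∑ r, x r * f r

/-- The velocity that the replicator dynamics prescribe at `x`. Payoffs are costs here: options
cheaper than average grow. -/
def replicatorVelocity (x f : ι → 𝕜) (i : ι) : 𝕜 :=
  x i * (averagePayoff x f - f i)

theorem sum_replicatorVelocity {x : ι → 𝕜} (f : ι → 𝕜) (hx : ∑ i, x i ≠ 0) :
    ∑ i, replicatorVelocity x f i = 0 := by
  simp only [replicatorVelocity, averagePayoff, mul_sub, Finset.sum_sub_distrib, ← Finset.sum_mul]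
  field_simp
  ring

theorem sum_mul_replicatorVelocity {x : ι → 𝕜} (f : ι → 𝕜) (hx : ∑ i, x i ≠ 0) :
    ∑ i, f i * replicatorVelocity x f i = -∑ i, x i * (f i - averagePayoff x f) ^ 2 :=
  calc ∑ i, f i * replicatorVelocity x f i
      = ∑ i, (averagePayoff x f * replicatorVelocity x f i
          - x i * (f i - averagePayoff x f) ^ 2) :=
        Finset.sum_congr rfl fun i _ => by rw [replicatorVelocity]; ring
    _ = -∑ i, x i * (f i - averagePayoff x f) ^ 2 := by
        rw [Finset.sum_sub_distrib, ← Finset.mul_sum, sum_replicatorVelocity f hx, mul_zero,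
          zero_sub]

theorem sum_mul_replicatorVelocity_nonpos [LinearOrder 𝕜] [IsStrictOrderedRing 𝕜] {x : ι → 𝕜}
    (f : ι → 𝕜) (hx₀ : ∀ i, 0 ≤ x i) (hx : ∑ i, x i ≠ 0) :
    ∑ i, f i * replicatorVelocity x f i ≤ 0 := by
  rw [sum_mul_replicatorVelocity f hx, neg_nonpos]
  exact Finset.sum_nonneg fun i _ => mul_nonneg (hx₀ i) (sq_nonneg _)

end Replicator

theorem hasDerivAt_div_const_sub {𝕜 : Type*} [NontriviallyNormedField 𝕜] {c y : 𝕜} (h : y ≠ c) :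
    HasDerivAt (fun z => z / (c - z)) (1 / (c - y) + y / (c - y) ^ 2) y := by
  have hne : c - y ≠ 0 := sub_ne_zero.mpr h.symm
  refine ((hasDerivAt_id y).div ((hasDerivAt_id y).const_sub c) hne).congr_deriv ?_
  simp only [id_eq]
  field_simp
  ring

section Cost

variable {Q : ℕ} {C : Fin Q → ℝ} {p : Fin Q → Fin Q → ℝ} {X : ℝ → Fin Q → Fin Q → ℝ} {s : Set ℝ}

theorem hasDerivWithinAt_cost {V : Fin Q → Fin Q → ℝ} {t : ℝ} (hC : ∀ i, ∑ l, X t l i ≠ C i)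
    (hX : ∀ j i, HasDerivWithinAt (fun u => X u j i) (V j i) s t) :
    HasDerivWithinAt (fun u => cost C p (X u)) (∑ j, ∑ i, payoff C p (X t) j i * V j i) s t := by
  rw [Finset.sum_comm]
  refine HasDerivWithinAt.fun_sum fun i _ => ?_
  have hload : HasDerivWithinAt (fun u => ∑ l, X u l i) (∑ l, V l i) s t :=
    HasDerivWithinAt.fun_sum fun l _ => hX l i
  have hprice : HasDerivWithinAt (fun u => ∑ r, p r i * X u r i) (∑ r, p r i * V r i) s t :=
    HasDerivWithinAt.fun_sum fun r _ => (hX r i).const_mul (p r i)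
  have hdelay := (hasDerivAt_div_const_sub (hC i)).comp_hasDerivWithinAt t hload
  refine (hdelay.add hprice).congr_deriv ?_
  rw [Finset.mul_sum, ← Finset.sum_add_distrib]
  exact Finset.sum_congr rfl fun j _ => by rw [payoff]; ring

theorem cost_nonincreasing_along_replicator_general (hs : Convex ℝ s)
    (hX₀ : ∀ t ∈ s, ∀ j i, 0 ≤ X t j i) (hC : ∀ t ∈ s, ∀ i, ∑ l, X t l i ≠ C i)
    (hrow : ∀ t ∈ s, ∀ j, ∑ i, X t j i ≠ 0)
    (hdyn : ∀ t ∈ s, ∀ j i, HasDerivWithinAt (fun u => X u j i)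
      (replicatorVelocity (X t j) (payoff C p (X t) j) i) s t) :
    AntitoneOn (fun t => cost C p (X t)) s := by
  have hderiv := fun t ht => hasDerivWithinAt_cost (p := p) (hC t ht) (hdyn t ht)
  refine antitoneOn_of_hasDerivWithinAt_nonpos hs (fun t ht => (hderiv t ht).continuousWithinAt)
    (fun t ht => (hderiv t (interior_subset ht)).mono interior_subset) fun t ht => ?_
  have hts : t ∈ s := interior_subset ht
  exact Finset.sum_nonpos fun j _ =>
    sum_mul_replicatorVelocity_nonpos _ (hX₀ t hts j) (hrow t hts j)

end Cost

/-- Along any trajectory of the replicator dynamics staying in the feasible domain with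
positive row sums, the total system cost is nonincreasing. -/
theorem cost_nonincreasing_along_replicator (Q : ℕ) (hQ : 1 ≤ Q)
    (C : Fin Q → ℝ) (hC : ∀ i, 0 < C i)
    (p : Fin Q → Fin Q → ℝ) (hp : ∀ j i, 0 ≤ p j i)
    (T : ℝ) (X : ℝ → Fin Q → Fin Q → ℝ)
    (hfeas : ∀ t ∈ Set.Ico (0:ℝ) T, X t ∈ feasible C)
    (hrow : ∀ t ∈ Set.Ico (0:ℝ) T, ∀ j, 0 < ∑ i, X t j i)
    (hdyn : ∀ t ∈ Set.Ico (0:ℝ) T, ∀ j i,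
      HasDerivAt (fun s => X s j i)
        (X t j i * ((1 / ∑ r, X t j r) * (∑ r, X t j r * payoff C p (X t) j r)
            - payoff C p (X t) j i)) t) :
    AntitoneOn (fun t => cost C p (X t)) (Set.Ico (0:ℝ) T) := by
  exact cost_nonincreasing_along_replicator_general (convex_Ico 0 T) (fun t ht => (hfeas t ht).1)
    (fun t ht i => ((hfeas t ht).2 i).ne) (fun t ht j => (hrow t ht j).ne')
    fun t ht j i => (hdyn t ht j i).hasDerivWithinAt
end

section
/- For every real κ, the set {x ∈ ℝ^Q : x_j > 0 for all j, F(x) ≠ ∅, and 𝒞*(x) ≤ κ} of load vectors whose minimum achievable system cost is at most κ is a convex subset of ℝ^Q. -/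
open Finset Set

/-- The feasible set F(x) of states in Ω whose row sums match the load vector x. -/
def feasLoad {Q : ℕ} (C : Fin Q → ℝ) (x : Fin Q → ℝ) : Set (Fin Q → Fin Q → ℝ) :=
  {X | X ∈ feasible C ∧ ∀ j, (∑ i, X j i) = x j}

/-- The minimum achievable system cost for a load vector x. -/
noncomputable def minCost {Q : ℕ} (C : Fin Q → ℝ) (p : Fin Q → Fin Q → ℝ)
    (x : Fin Q → ℝ) : ℝ :=
  sInf (cost C p '' feasLoad C x)

/-!
The minimum cost is the infimal projection of the cost along the linear map sending a state to its
row sums, and infimal projection preserves convexity as long as the function is bounded below on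
fibers. The cost is convex because `s / (c - s) = c (c - s)⁻¹ - 1`, and bounded below because every
entry of a feasible state lies between `0` and a capacity.
-/

section InfimalProjection

variable {E F : Type*} [AddCommMonoid E] [Module ℝ E] [AddCommMonoid F] [Module ℝ F]

theorem convexOn_sInf_image_fiber {s : Set E} {f : E → ℝ} (hf : ConvexOn ℝ s f) (g : E →ₗ[ℝ] F)
    (hbdd : ∀ y ∈ g '' s, BddBelow (f '' (s ∩ g ⁻¹' {y}))) :
    ConvexOn ℝ (g '' s) fun y => sInf (f '' (s ∩ g ⁻¹' {y})) := by
  have hgs : Convex ℝ (g '' s) := hf.1.linear_image g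
  have near_min : ∀ y ∈ g '' s, ∀ ε > 0,
      ∃ x ∈ s, g x = y ∧ f x < sInf (f '' (s ∩ g ⁻¹' {y})) + ε := by
    rintro _ ⟨x, hx, rfl⟩ ε hε
    have hne : (f '' (s ∩ g ⁻¹' {g x})).Nonempty := ⟨f x, x, ⟨hx, rfl⟩, rfl⟩
    obtain ⟨_, ⟨z, ⟨hz, hgz⟩, rfl⟩, hlt⟩ := Real.lt_sInf_add_pos hne hε
    exact ⟨z, hz, hgz, hlt⟩
  refine ⟨hgs, fun y₁ hy₁ y₂ hy₂ a b ha hb hab => le_of_forall_pos_le_add fun ε hε => ?_⟩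
  obtain ⟨x₁, hx₁, hgx₁, hlt₁⟩ := near_min y₁ hy₁ ε hε
  obtain ⟨x₂, hx₂, hgx₂, hlt₂⟩ := near_min y₂ hy₂ ε hε
  have hmem : a • x₁ + b • x₂ ∈ s ∩ g ⁻¹' {a • y₁ + b • y₂} :=
    ⟨hf.1 hx₁ hx₂ ha hb hab, by simp [hgx₁, hgx₂]⟩
  calc sInf (f '' (s ∩ g ⁻¹' {a • y₁ + b • y₂}))
      ≤ f (a • x₁ + b • x₂) :=
        csInf_le (hbdd _ (hgs hy₁ hy₂ ha hb hab)) (mem_image_of_mem f hmem)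
    _ ≤ a • f x₁ + b • f x₂ := hf.2 hx₁ hx₂ ha hb hab
    _ ≤ a • (sInf (f '' (s ∩ g ⁻¹' {y₁})) + ε) + b • (sInf (f '' (s ∩ g ⁻¹' {y₂})) + ε) := by
        gcongr
    _ = a • sInf (f '' (s ∩ g ⁻¹' {y₁})) + b • sInf (f '' (s ∩ g ⁻¹' {y₂})) + ε := by
        simp only [smul_eq_mul]
        linear_combination ε * hab

end InfimalProjection

theorem convexOn_finset_sum {ι 𝕜 E β : Type*} [Semiring 𝕜] [PartialOrder 𝕜] [AddCommMonoid E]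
    [SMul 𝕜 E] [AddCommMonoid β] [PartialOrder β] [IsOrderedAddMonoid β] [Module 𝕜 β] {s : Set E}
    (hs : Convex 𝕜 s) {t : Finset ι} {f : ι → E → β} (hf : ∀ i ∈ t, ConvexOn 𝕜 s (f i)) :
    ConvexOn 𝕜 s (∑ i ∈ t, f i) :=
  Finset.sum_induction f (ConvexOn 𝕜 s) (fun _ _ => ConvexOn.add) (convexOn_const 0 hs) hf

theorem convexOn_div_const_sub {𝕜 : Type*} [Field 𝕜] [LinearOrder 𝕜] [IsStrictOrderedRing 𝕜]
    {c : 𝕜} (hc : 0 ≤ c) : ConvexOn 𝕜 (Set.Iio c) fun s => s / (c - s) := by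
  have hinv : ConvexOn 𝕜 (Set.Iio c) fun s => (c - s)⁻¹ := by
    have hcomp := (convexOn_zpow (-1)).comp_affineMap (AffineMap.const 𝕜 𝕜 c - AffineMap.id 𝕜 𝕜)
    have hsub : Set.Iio c ⊆ (AffineMap.const 𝕜 𝕜 c - AffineMap.id 𝕜 𝕜) ⁻¹' Set.Ioi 0 :=
      fun _ hs => sub_pos.2 (Set.mem_Iio.1 hs)
    simpa [Function.comp_def] using hcomp.subset hsub (convex_Iio c)
  refine ((hinv.smul hc).add_const (-1)).congr fun s hs => ?_
  have : c - s ≠ 0 := (sub_pos.2 hs).ne'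
  simp only [Pi.add_apply, smul_eq_mul]
  field_simp
  ring

theorem convex_setOf_forall_pos (ι 𝕜 : Type*) [Semiring 𝕜] [PartialOrder 𝕜]
    [IsStrictOrderedRing 𝕜] : Convex 𝕜 {x : ι → 𝕜 | ∀ j, 0 < x j} := by
  simpa [Set.pi] using convex_pi fun (j : ι) (_ : j ∈ univ) => convex_Ioi (𝕜 := 𝕜) (0 : 𝕜)

section MatrixSums

variable {m n R : Type*} [Semiring R]

/-- The linear map sending `X` to its row sums `∑ i, X j i`: the load vector that a state serves. -/
def rowSums [Fintype n] : (m → n → R) →ₗ[R] m → R :=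
  LinearMap.pi fun j => ∑ i, LinearMap.proj i ∘ₗ LinearMap.proj j

/-- The sum `∑ l, X l i` of column `i` as a linear functional of `X`: the total demand forwarded to
mTracker `i`. -/
def colSum [Fintype m] (i : n) : (m → n → R) →ₗ[R] R :=
  ∑ l, LinearMap.proj i ∘ₗ LinearMap.proj l

@[simp]
theorem rowSums_apply [Fintype n] (X : m → n → R) (j : m) : rowSums X j = ∑ i, X j i := by
  simp [rowSums]

@[simp]
theorem colSum_apply [Fintype m] (i : n) (X : m → n → R) : colSum i X = ∑ l, X l i := by
  simp [colSum]

end MatrixSums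

section SystemCost

variable {Q : ℕ}

theorem capacity_pos_of_mem_feasible {C : Fin Q → ℝ} {X : Fin Q → Fin Q → ℝ}
    (hX : X ∈ feasible C) (i : Fin Q) : 0 < C i :=
  (Finset.sum_nonneg fun l _ => hX.1 l i).trans_lt (hX.2 i)

theorem le_capacity_of_mem_feasible {C : Fin Q → ℝ} {X : Fin Q → Fin Q → ℝ}
    (hX : X ∈ feasible C) (j i : Fin Q) : X j i ≤ C i :=
  (Finset.single_le_sum (fun l _ => hX.1 l i) (Finset.mem_univ j)).trans (hX.2 i).le

theorem convex_feasible (C : Fin Q → ℝ) : Convex ℝ (feasible C) := by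
  have hfeas : feasible C = Set.Ici 0 ∩ ⋂ i, colSum i ⁻¹' Set.Iio (C i) := by
    ext X
    simp [feasible, Pi.le_def]
  rw [hfeas]
  exact (convex_Ici 0).inter (convex_iInter fun i => (convex_Iio (C i)).linear_preimage (colSum i))

theorem convexOn_cost (C : Fin Q → ℝ) (p : Fin Q → Fin Q → ℝ) :
    ConvexOn ℝ (feasible C) (cost C p) := by
  have hΩ := convex_feasible C
  have hdelay (i : Fin Q) :
      ConvexOn ℝ (feasible C) fun X => (∑ r, X r i) / (C i - ∑ l, X l i) := by
    obtain hempty | ⟨X₀, hX₀⟩ := (feasible C).eq_empty_or_nonempty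
    · simp [hempty, ConvexOn, convex_empty]
    · have hcomp := (convexOn_div_const_sub (capacity_pos_of_mem_feasible hX₀ i).le).comp_linearMap
        (colSum (m := Fin Q) i)
      simpa [Function.comp_def] using hcomp.subset (fun X hX => by simpa using hX.2 i) hΩ
  have hprice (i : Fin Q) : ConvexOn ℝ (feasible C) fun X => ∑ r, p r i * X r i := by
    let price : (Fin Q → Fin Q → ℝ) →ₗ[ℝ] ℝ :=
      ∑ r, p r i • ((LinearMap.proj i : (Fin Q → ℝ) →ₗ[ℝ] ℝ) ∘ₗ LinearMap.proj r)
    exact (price.convexOn hΩ).congr fun X _ => by simp [price]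
  refine (convexOn_finset_sum hΩ fun i (_ : i ∈ Finset.univ) =>
    (hdelay i).add (hprice i)).congr fun X _ => ?_
  simp [cost]

theorem bddBelow_cost_image_feasible (C : Fin Q → ℝ) (p : Fin Q → Fin Q → ℝ) :
    BddBelow (cost C p '' feasible C) := by
  refine ⟨∑ i, ∑ r, -(|p r i| * C i), ?_⟩
  rintro _ ⟨X, hX, rfl⟩
  refine Finset.sum_le_sum fun i _ => ?_
  have hdelay : 0 ≤ (∑ r, X r i) / (C i - ∑ l, X l i) :=
    div_nonneg (Finset.sum_nonneg fun r _ => hX.1 r i) (sub_pos.2 (hX.2 i)).le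
  have hprice (r : Fin Q) : -(|p r i| * C i) ≤ p r i * X r i := by
    calc -(|p r i| * C i) ≤ -(|p r i| * X r i) := by
          gcongr
          exact le_capacity_of_mem_feasible hX r i
      _ = -|p r i| * X r i := (neg_mul _ _).symm
      _ ≤ p r i * X r i := mul_le_mul_of_nonneg_right (neg_abs_le _) (hX.1 r i)
  exact (Finset.sum_le_sum fun r _ => hprice r).trans (le_add_of_nonneg_left hdelay)

theorem feasLoad_eq_feasible_inter_fiber (C x : Fin Q → ℝ) :
    feasLoad C x = feasible C ∩ rowSums ⁻¹' {x} := by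
  ext X
  simp [feasLoad, funext_iff]

theorem setOf_feasLoad_nonempty_eq_image (C : Fin Q → ℝ) :
    {x | (feasLoad C x).Nonempty} = rowSums '' feasible C := by
  ext x
  simp only [feasLoad_eq_feasible_inter_fiber]
  rfl

theorem convexOn_minCost (C : Fin Q → ℝ) (p : Fin Q → Fin Q → ℝ) :
    ConvexOn ℝ {x | (feasLoad C x).Nonempty} (minCost C p) := by
  rw [setOf_feasLoad_nonempty_eq_image]
  refine (convexOn_sInf_image_fiber (convexOn_cost C p) rowSums fun _ _ =>
    (bddBelow_cost_image_feasible C p).mono (image_mono inter_subset_left)).congr fun x _ => ?_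
  rw [minCost, feasLoad_eq_feasible_inter_fiber]

theorem minCost_sublevel_convex_general (C : Fin Q → ℝ) (p : Fin Q → Fin Q → ℝ) (κ : ℝ) :
    Convex ℝ {x : Fin Q → ℝ | (feasLoad C x).Nonempty ∧ minCost C p x ≤ κ} :=
  (convexOn_minCost C p).convex_le κ

end SystemCost

/-- For every κ, the sublevel set of load vectors whose minimum achievable system cost
is at most κ is convex. -/
theorem minCost_sublevel_convex (Q : ℕ) (hQ : 1 ≤ Q)
    (C : Fin Q → ℝ) (hC : ∀ i, 0 < C i)
    (p : Fin Q → Fin Q → ℝ) (hp : ∀ j i, 0 ≤ p j i) (κ : ℝ) :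
    Convex ℝ {x : Fin Q → ℝ | (∀ j, 0 < x j) ∧ (feasLoad C x).Nonempty ∧
      minCost C p x ≤ κ} :=
  (convex_setOf_forall_pos _ _).inter (minCost_sublevel_convex_general C p κ)
end
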